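/- Let I ⊆ A = K[x_1,…,x_n] be a nonzero proper monomial ideal, let J be its minimal monomial reduction ideal (the ideal generated by the monomials x^a with a ∈ ext(I)), and let ℓ = c(I) + 1 where c(I) = max{dim F : F a compact face of conv(I)} and dim F is the dimension of the affine hull of F. If I^a = \overline{I^a} for all integers 1 ≤ a ≤ ℓ−1, then I^ℓ = J·I^{ℓ−1}, and I is normal, i.e. I^a = \overline{I^a} for every integer a ≥ 1. -/

import Mathlib

open MvPolynomial Pointwise

attribute [local instance] Classical.propDecidable

noncomputable section

/-- The real exponent vector of a monomial exponent `a : Fin n →₀ ℕ`. -/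
def expVec {n : ℕ} (a : Fin n →₀ ℕ) : Fin n → ℝ := fun i => (a i : ℝ)

/-- The standard inner product on `ℝ^n`. -/
def dotR {n : ℕ} (u v : Fin n → ℝ) : ℝ := ∑ i, u i * v i

/-- A monomial ideal: an ideal generated by a set of monomials. -/
def IsMonomialIdeal {K : Type*} [Field K] {n : ℕ} (I : Ideal (MvPolynomial (Fin n) K)) : Prop :=
  ∃ S : Set (Fin n →₀ ℕ), I = Ideal.span ((fun a => (monomial a (1 : K))) '' S)

/-- The Newton polyhedron of an ideal: the convex hull of the exponent vectors of the
monomials belonging to the ideal. -/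
def newtonPolyhedron {K : Type*} [Field K] {n : ℕ} (I : Ideal (MvPolynomial (Fin n) K)) :
    Set (Fin n → ℝ) :=
  convexHull ℝ {v | ∃ a : Fin n →₀ ℕ, monomial a (1 : K) ∈ I ∧ v = expVec a}

/-- The hyperplane `{v : ⟨u,v⟩ = c}` is a supporting hyperplane of `C`:
`C ⊆ {v : ⟨u,v⟩ ≥ c}` and the hyperplane meets `C`. -/
def IsSupp {n : ℕ} (C : Set (Fin n → ℝ)) (u : Fin n → ℝ) (c : ℝ) : Prop :=
  (∀ v ∈ C, c ≤ dotR u v) ∧ ∃ v ∈ C, dotR u v = c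

/-- `F` is a proper face of `C`: `F = S ∩ C` for some supporting hyperplane `S`, `F ≠ C`. -/
def IsProperFace {n : ℕ} (C F : Set (Fin n → ℝ)) : Prop :=
  ∃ u c, u ≠ 0 ∧ IsSupp C u c ∧ F = {v ∈ C | dotR u v = c} ∧ F ≠ C

/-- A compact face is a proper face that is compact. -/
def IsCompactFace {n : ℕ} (C F : Set (Fin n → ℝ)) : Prop :=
  IsProperFace C F ∧ IsCompact F

/-- A maximal compact face: a compact face maximal under inclusion. -/
def IsMaxCompactFace {n : ℕ} (C F : Set (Fin n → ℝ)) : Prop :=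
  IsCompactFace C F ∧ ∀ G, IsCompactFace C G → F ⊆ G → F = G

/-- The graded maximal ideal `(x_1, …, x_n)` of `K[x_1, …, x_n]`. -/
def maxIdeal (K : Type*) [Field K] (n : ℕ) : Ideal (MvPolynomial (Fin n) K) :=
  Ideal.span (Set.range fun i => (X i : MvPolynomial (Fin n) K))

/-- `f` is a minimal generator of the monomial ideal `L` if `f ∈ L` and `f ∉ (x_1,…,x_n)·L`. -/
def IsMinGen {K : Type*} [Field K] {n : ℕ} (L : Ideal (MvPolynomial (Fin n) K))
    (f : MvPolynomial (Fin n) K) : Prop :=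
  f ∈ L ∧ f ∉ maxIdeal K n * L

/-- `L` is a reduction ideal of `I`: `L ⊆ I` and `L·I^{m-1} = I^m` for some `m ≥ 1`. -/
def IsReduction {K : Type*} [Field K] {n : ℕ} (L I : Ideal (MvPolynomial (Fin n) K)) : Prop :=
  L ≤ I ∧ ∃ m : ℕ, 1 ≤ m ∧ L * I ^ (m - 1) = I ^ m

/-- `c(I)`: the maximum of the dimensions (of affine hulls) of the compact faces of the
Newton polyhedron of `I`. -/
def maxCompactFaceDim {K : Type*} [Field K] {n : ℕ} (I : Ideal (MvPolynomial (Fin n) K)) : ℕ :=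
  sSup {d : ℕ | ∃ F, IsCompactFace (newtonPolyhedron I) F ∧
    d = Module.finrank ℝ (affineSpan ℝ F).direction}

/-- The integral closure of a monomial ideal: the ideal generated by the monomials whose
exponent vectors lie in the Newton polyhedron. -/
def intCl {K : Type*} [Field K] {n : ℕ} (L : Ideal (MvPolynomial (Fin n) K)) :
    Ideal (MvPolynomial (Fin n) K) :=
  Ideal.span {f | ∃ b : Fin n →₀ ℕ, expVec b ∈ newtonPolyhedron L ∧ f = monomial b (1 : K)}

/-- Finitely generated cones are closed. -/
lemma cone_closed {n : ℕ} {ι : Type*} (f : ι → (Fin n → ℝ)) (s : Finset ι) :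
    IsClosed {x : Fin n → ℝ | ∃ c : ι → ℝ, (∀ i, 0 ≤ c i) ∧ x = ∑ i ∈ s, c i • f i} := by
  induction s using Finset.strongInduction with
  | H s ih =>
  by_cases h : LinearIndependent ℝ (fun i : s => f i)
  · have hL : Function.Injective (Fintype.linearCombination ℝ (fun i : s => f i)) :=
      h.fintypeLinearCombination_injective
    have hc := LinearMap.isClosedEmbedding_of_injective (LinearMap.ker_eq_bot.2 hL)
    have h2 := hc.isClosedMap _ (isClosed_Ici (a := (0 : s → ℝ)))
    convert h2 using 1
    ext x
    constructor
    · rintro ⟨c, hc, rfl⟩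
      refine ⟨fun i => c i, fun i => hc i, ?_⟩
      rw [Fintype.linearCombination_apply]
      exact (Finset.sum_coe_sort s (fun i => c i • f i))
    · rintro ⟨c, hc, rfl⟩
      refine ⟨fun i => if hi : i ∈ s then c ⟨i, hi⟩ else 0, ?_, ?_⟩
      · intro i
        dsimp only
        split_ifs with hi
        · exact hc _
        · exact le_rfl
      · rw [Fintype.linearCombination_apply, ← Finset.sum_coe_sort s]
        refine Finset.sum_congr rfl fun i _ => ?_
        simp
  · rw [Fintype.not_linearIndependent_iff] at h
    obtain ⟨g, hg0, i0, hi0⟩ := h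
    -- extend and normalise the sign
    obtain ⟨μ, hμ, j, hjs, hj⟩ : ∃ μ : ι → ℝ, ∑ i ∈ s, μ i • f i = 0 ∧ ∃ j ∈ s, 0 < μ j := by
      let μ : ι → ℝ := fun i => if hi : i ∈ s then g ⟨i, hi⟩ else 0
      have hμ : ∑ i ∈ s, μ i • f i = 0 := by
        rw [← hg0, ← Finset.sum_coe_sort s]
        refine Finset.sum_congr rfl fun i _ => ?_
        simp [μ]
      have hμ0 : μ i0 = g i0 := by simp [μ]
      rcases lt_or_gt_of_ne hi0 with h | h
      · refine ⟨fun i => - μ i, ?_, i0, i0.2, ?_⟩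
        · simp only [neg_smul, Finset.sum_neg_distrib, hμ, neg_zero]
        · dsimp only; rw [hμ0]; linarith
      · exact ⟨μ, hμ, i0, i0.2, by rw [hμ0]; exact h⟩
    have key : {x : Fin n → ℝ | ∃ c : ι → ℝ, (∀ i, 0 ≤ c i) ∧ x = ∑ i ∈ s, c i • f i} =
        ⋃ k ∈ s, {x : Fin n → ℝ | ∃ c : ι → ℝ, (∀ i, 0 ≤ c i) ∧
          x = ∑ i ∈ s.erase k, c i • f i} := by
      ext x
      simp only [Set.mem_ofPred_eq, Set.mem_iUnion]
      constructor
      · rintro ⟨c, hc, rfl⟩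
        obtain ⟨k, hk, hmin⟩ := Finset.exists_min_image (s.filter fun i => 0 < μ i)
          (fun i => c i / μ i) ⟨j, by simp [hjs, hj]⟩
        rw [Finset.mem_filter] at hk
        have ht : 0 ≤ c k / μ k := div_nonneg (hc k) hk.2.le
        refine ⟨k, hk.1, fun i => if i ∈ s then c i - c k / μ k * μ i else 0, ?_, ?_⟩
        · intro i
          dsimp only
          split_ifs with hi
          · by_cases hp : 0 < μ i
            · have := hmin i (by simp [hi, hp])
              rw [le_div_iff₀ hp] at this
              linarith
            · have := mul_nonneg ht (neg_nonneg.2 (not_lt.1 hp))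
              have := hc i
              linarith
          · exact le_rfl
        · have h1 : ∑ i ∈ s, c i • f i = ∑ i ∈ s, (c i - c k / μ k * μ i) • f i := by
            have : ∑ i ∈ s, (c k / μ k * μ i) • f i = 0 := by
              simp only [mul_smul, ← Finset.smul_sum, hμ, smul_zero]
            simp only [sub_smul, Finset.sum_sub_distrib, this, sub_zero]
          rw [h1, ← Finset.add_sum_erase _ _ hk.1, div_mul_cancel₀ _ hk.2.ne', sub_self, zero_smul,
            zero_add]
          refine Finset.sum_congr rfl fun i hi => ?_
          dsimp only
          rw [if_pos (Finset.mem_of_mem_erase hi)]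
      · rintro ⟨k, hk, c, hc, rfl⟩
        refine ⟨fun i => if i = k then 0 else c i, ?_, ?_⟩
        · intro i
          dsimp only
          split_ifs
          · exact le_rfl
          · exact hc i
        · rw [← Finset.add_sum_erase _ _ hk]
          dsimp only
          rw [if_pos rfl, zero_smul, zero_add]
          refine Finset.sum_congr rfl fun i hi => ?_
          rw [if_neg (Finset.ne_of_mem_erase hi)]
    rw [key]
    exact isClosed_biUnion_finset fun k hk => ih _ (Finset.erase_ssubset hk)

lemma dotR_eq {n : ℕ} (f : (Fin n → ℝ) →ₗ[ℝ] ℝ) (v : Fin n → ℝ) :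
    dotR (fun i => f (Pi.single i 1)) v = f v := by
  rw [LinearMap.pi_apply_eq_sum_univ f v]
  unfold dotR
  refine Finset.sum_congr rfl fun i _ => ?_
  have : (Pi.single i (1 : ℝ) : Fin n → ℝ) = fun j => if i = j then 1 else 0 := by
    ext j
    simp [Pi.single_apply, eq_comm]
  dsimp only
  rw [this, smul_eq_mul, mul_comm]

/-- A Pareto-minimal point has a strictly positive supporting functional. -/
lemma pareto {n : ℕ} (G : Finset (Fin n → ℝ)) (p : Fin n → ℝ)
    (hp : ∀ p' d : Fin n → ℝ, p' ∈ convexHull ℝ (G : Set (Fin n → ℝ)) → 0 ≤ d →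
      p' + d ≤ p → p' + d = p) :
    ∃ u : Fin n → ℝ, (∀ i, 0 < u i) ∧ ∀ g ∈ G, dotR u p ≤ dotR u g := by
  let φ : (G ⊕ Fin n) → (Fin n → ℝ) := Sum.elim (fun g => (g : Fin n → ℝ) - p)
    (fun i => Pi.single i 1)
  set C := {x : Fin n → ℝ | ∃ c : (G ⊕ Fin n) → ℝ, (∀ i, 0 ≤ c i) ∧ x = ∑ i, c i • φ i} with hC
  have hcl : IsClosed C := cone_closed φ Finset.univ
  have hadd : ∀ x ∈ C, ∀ y ∈ C, x + y ∈ C := by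
    rintro x ⟨c, hc, rfl⟩ y ⟨d, hd, rfl⟩
    exact ⟨c + d, fun i => add_nonneg (hc i) (hd i), by
      simp only [Pi.add_apply, add_smul, Finset.sum_add_distrib]⟩
  have hsm : ∀ t : ℝ, 0 ≤ t → ∀ x ∈ C, t • x ∈ C := by
    rintro t ht x ⟨c, hc, rfl⟩
    exact ⟨t • c, fun i => mul_nonneg ht (hc i), by
      simp only [Pi.smul_apply, smul_eq_mul, mul_smul, Finset.smul_sum]⟩
  have hgen : ∀ i, φ i ∈ C := fun i => ⟨Pi.single i 1, fun j => by
    by_cases h : j = i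
    · subst h; simp
    · simp [h], by
      rw [Finset.sum_eq_single i]
      · simp
      · intro j _ hj; simp [hj]
      · simp⟩
  have hconv : Convex ℝ C := by
    intro x hx y hy a b ha hb _
    exact hadd _ (hsm a ha x hx) _ (hsm b hb y hy)
  have h0 : (0 : Fin n → ℝ) ∈ C := ⟨0, fun _ => le_rfl, by simp⟩
  have hdisj : Disjoint (-(stdSimplex ℝ (Fin n))) C := by
    rw [Set.disjoint_left]
    rintro x hx ⟨c, hc, hxc⟩
    rw [Set.mem_neg] at hx
    have hx0 : x ≠ 0 := by
      rintro rfl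
      have := hx.2
      simp at this
    have hxle : x ≤ 0 := fun i => by
      have := hx.1 i
      simp only [Pi.neg_apply] at this
      simp only [Pi.zero_apply]
      linarith
    rw [Fintype.sum_sum_type] at hxc
    simp only [φ, Sum.elim_inl, Sum.elim_inr, smul_sub, Finset.sum_sub_distrib,
      ← Finset.sum_smul] at hxc
    set T := ∑ g : G, c (Sum.inl g) with hT
    set d : Fin n → ℝ := ∑ i : Fin n, c (Sum.inr i) • Pi.single i (1 : ℝ) with hd
    have hd0 : 0 ≤ d := Finset.sum_nonneg fun i _ => smul_nonneg (hc _) (by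
      intro j; by_cases h : j = i
      · subst h; simp
      · simp [h])
    have hT0 : 0 ≤ T := Finset.sum_nonneg fun i _ => hc _
    rcases hT0.eq_or_lt with hTz | hTp
    · have : ∀ g : G, c (Sum.inl g) = 0 := fun g =>
        (Finset.sum_eq_zero_iff_of_nonneg (fun i _ => hc _)).1 hTz.symm g (Finset.mem_univ _)
      rw [← hTz] at hxc
      simp only [this, zero_smul, Finset.sum_const_zero, sub_zero, zero_add] at hxc
      exact hx0 (le_antisymm hxle (hxc ▸ hd0))
    · set y : Fin n → ℝ := ∑ g : G, (T⁻¹ * c (Sum.inl g)) • (g : Fin n → ℝ) with hy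
      have hyc : y ∈ convexHull ℝ (G : Set (Fin n → ℝ)) := by
        refine (convex_convexHull ℝ _).sum_mem (fun g _ => mul_nonneg (inv_nonneg.2 hT0) (hc _)) ?_
          (fun g _ => subset_convexHull ℝ _ g.2)
        rw [← Finset.mul_sum, inv_mul_cancel₀ hTp.ne']
      have hyT : y = T⁻¹ • ∑ g : G, c (Sum.inl g) • (g : Fin n → ℝ) := by
        rw [hy, Finset.smul_sum]; simp only [mul_smul]
      have hyx : y + T⁻¹ • d = p + T⁻¹ • x := by
        rw [hxc, hyT, smul_add, smul_sub, smul_smul, inv_mul_cancel₀ hTp.ne', one_smul]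
        abel
      have hsx : T⁻¹ • x ≤ 0 := smul_nonpos_of_nonneg_of_nonpos (inv_nonneg.2 hT0) hxle
      have := hp y (T⁻¹ • d) hyc (smul_nonneg (inv_nonneg.2 hT0) hd0) (by
        rw [hyx]; exact add_le_of_nonpos_right hsx)
      rw [hyx] at this
      have h3 : T⁻¹ • x = 0 := by simpa using this
      rcases smul_eq_zero.1 h3 with h | h
      · exact (inv_pos.2 hTp).ne' h
      · exact hx0 h
  obtain ⟨f, a, b, h1, hab, h2⟩ := geometric_hahn_banach_compact_closed
    (convex_stdSimplex ℝ (Fin n)).neg (isCompact_stdSimplex ℝ (Fin n)).neg hconv hcl hdisj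
  have hb0 : b < 0 := by simpa using h2 0 h0
  have hnn : ∀ x ∈ C, 0 ≤ f x := by
    intro x hx
    by_contra hneg
    push Not at hneg
    have := h2 ((b / f x) • x) (hsm _ (div_nonneg_of_nonpos hb0.le hneg.le) x hx)
    rw [map_smul, smul_eq_mul, div_mul_cancel₀ _ hneg.ne] at this
    exact lt_irrefl _ this
  have heq := dotR_eq (f : (Fin n → ℝ) →ₗ[ℝ] ℝ)
  refine ⟨fun i => f (Pi.single i 1), fun i => ?_, fun g hg => ?_⟩
  · have := h1 (-(Pi.single i 1)) (by
      rw [Set.mem_neg, neg_neg]; exact single_mem_stdSimplex ℝ i)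
    rw [map_neg] at this
    linarith
  · have e1 := heq p
    have e2 := heq g
    simp only [ContinuousLinearMap.coe_coe] at e1 e2
    rw [e1, e2]
    have := hnn _ (hgen (Sum.inl ⟨g, hg⟩))
    simp only [φ, Sum.elim_inl, map_sub] at this
    linarith

lemma mem_mon_span {K : Type*} [Field K] {n : ℕ} {S : Set (Fin n →₀ ℕ)} {a : Fin n →₀ ℕ} :
    monomial a (1 : K) ∈ Ideal.span ((fun a => (monomial a (1 : K))) '' S) ↔
      ∃ s ∈ S, s ≤ a := by
  rw [mem_ideal_span_monomial_image]
  simp [support_monomial]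

lemma expVec_add {n : ℕ} (a b : Fin n →₀ ℕ) : expVec (a + b) = expVec a + expVec b := by
  ext i; simp [expVec]

lemma expVec_nonneg {n : ℕ} (a : Fin n →₀ ℕ) : 0 ≤ expVec a := fun i => by simp [expVec]

lemma newton_nonneg {K : Type*} [Field K] {n : ℕ} (I : Ideal (MvPolynomial (Fin n) K))
    {v : Fin n → ℝ} (hv : v ∈ newtonPolyhedron I) : 0 ≤ v := by
  have : newtonPolyhedron I ⊆ Set.Ici 0 := convexHull_min (by
    rintro _ ⟨a, _, rfl⟩; exact expVec_nonneg a) (convex_Ici 0)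
  exact this hv

lemma newton_convex {K : Type*} [Field K] {n : ℕ} (I : Ideal (MvPolynomial (Fin n) K)) :
    Convex ℝ (newtonPolyhedron I) := convex_convexHull ℝ _

lemma mem_newton {K : Type*} [Field K] {n : ℕ} {I : Ideal (MvPolynomial (Fin n) K)}
    {a : Fin n →₀ ℕ} (ha : monomial a (1 : K) ∈ I) : expVec a ∈ newtonPolyhedron I :=
  subset_convexHull ℝ _ ⟨a, ha, rfl⟩

lemma newton_add_nat {K : Type*} [Field K] {n : ℕ} (I : Ideal (MvPolynomial (Fin n) K))
    {v : Fin n → ℝ} (hv : v ∈ newtonPolyhedron I) (d : Fin n →₀ ℕ) :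
    v + expVec d ∈ newtonPolyhedron I := by
  have : newtonPolyhedron I ⊆ (fun v => v + expVec d) ⁻¹' (newtonPolyhedron I) := by
    refine convexHull_min ?_ ?_
    · rintro _ ⟨a, ha, rfl⟩
      rw [Set.mem_preimage, ← expVec_add]
      refine mem_newton ?_
      have := I.mul_mem_right (monomial d 1) ha
      rwa [monomial_mul, one_mul] at this
    · exact (newton_convex I).translate_preimage_left _
  exact this hv

lemma newton_add {K : Type*} [Field K] {n : ℕ} (I : Ideal (MvPolynomial (Fin n) K))
    {v d : Fin n → ℝ} (hv : v ∈ newtonPolyhedron I) (hd : 0 ≤ d) :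
    v + d ∈ newtonPolyhedron I := by
  have h1 : ∀ (i : Fin n) (t : ℝ), 0 ≤ t → ∀ w ∈ newtonPolyhedron I,
      w + Pi.single i t ∈ newtonPolyhedron I := by
    intro i t ht w hw
    obtain ⟨N, hN⟩ := exists_nat_gt t
    have hN0 : (0 : ℝ) < N := ht.trans_lt hN
    have h2 := newton_add_nat I hw (Finsupp.single i N)
    have h3 := (newton_convex I).add_smul_mem hw h2 (t := t / N)
      ⟨by positivity, (div_le_one hN0).2 hN.le⟩
    convert h3 using 2
    ext j
    by_cases hj : j = i
    · subst hj; simp [expVec, div_mul_cancel₀ _ hN0.ne']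
    · simp [expVec, hj]
  have h4 : ∀ s : Finset (Fin n), v + ∑ i ∈ s, Pi.single i (d i) ∈ newtonPolyhedron I := by
    intro s
    induction s using Finset.induction_on with
    | empty => simpa using hv
    | insert i s hi ih =>
      rw [Finset.sum_insert hi, add_comm (Pi.single (M := fun _ => ℝ) i (d i)), ← add_assoc]
      exact h1 i _ (hd i) _ ih
  have := h4 Finset.univ
  rwa [Finset.univ_sum_single] at this

lemma newton_gens {K : Type*} [Field K] {n : ℕ} (I : Ideal (MvPolynomial (Fin n) K))
    (hI : IsMonomialIdeal I) : ∃ G : Finset (Fin n → ℝ),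
      newtonPolyhedron I = convexHull ℝ (G : Set (Fin n → ℝ)) + Set.Ici 0 := by
  obtain ⟨S, hS⟩ := hI
  obtain ⟨s', hs', hspan⟩ := (Submodule.fg_span_iff_fg_span_finset_subset
    ((fun a => (monomial a (1 : K))) '' S)).1 (by
      have : I.FG := IsNoetherian.noetherian I
      rw [hS] at this; exact this)
  obtain ⟨T, hTS, hT⟩ := Finset.subset_set_image_iff.1 hs'
  have hIT : I = Ideal.span ((fun a => (monomial a (1 : K))) '' (T : Set (Fin n →₀ ℕ))) := by
    rw [hS]
    refine hspan.trans ?_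
    rw [← hT, Finset.coe_image]
  refine ⟨T.image expVec, Set.Subset.antisymm ?_ ?_⟩
  · refine convexHull_min ?_ ((convex_convexHull ℝ _).add (convex_Ici 0))
    rintro _ ⟨a, ha, rfl⟩
    rw [hIT, mem_mon_span] at ha
    obtain ⟨t, ht, hta⟩ := ha
    refine ⟨expVec t, subset_convexHull ℝ _ (by
      rw [Finset.coe_image]; exact ⟨t, ht, rfl⟩), expVec (a - t), expVec_nonneg _, ?_⟩
    dsimp only
    rw [← expVec_add, add_tsub_cancel_of_le hta]
  · rintro _ ⟨v, hv, d, hd, rfl⟩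
    refine newton_add I ?_ hd
    refine convexHull_min ?_ (newton_convex I) hv
    rw [Finset.coe_image]
    rintro _ ⟨t, ht, rfl⟩
    refine mem_newton ?_
    rw [hIT, mem_mon_span]
    exact ⟨t, ht, le_rfl⟩

lemma newton_closed {K : Type*} [Field K] {n : ℕ} (I : Ideal (MvPolynomial (Fin n) K))
    (hI : IsMonomialIdeal I) : IsClosed (newtonPolyhedron I) := by
  obtain ⟨G, hG⟩ := newton_gens I hI
  rw [hG]
  exact isClosed_Ici.add_left_of_isCompact (G.finite_toSet.isCompact_convexHull (𝕜 := ℝ))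

lemma dotR_add {n : ℕ} (u v w : Fin n → ℝ) : dotR u (v + w) = dotR u v + dotR u w := by
  simp [dotR, mul_add, Finset.sum_add_distrib]

lemma dotR_smul {n : ℕ} (u v : Fin n → ℝ) (t : ℝ) : dotR u (t • v) = t * dotR u v := by
  simp only [dotR, Finset.mul_sum, Pi.smul_apply, smul_eq_mul]
  exact Finset.sum_congr rfl fun i _ => by ring

lemma dotR_nonneg {n : ℕ} {u v : Fin n → ℝ} (hu : 0 ≤ u) (hv : 0 ≤ v) : 0 ≤ dotR u v :=
  Finset.sum_nonneg fun i _ => mul_nonneg (hu i) (hv i)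

lemma dotR_continuous {n : ℕ} (u : Fin n → ℝ) : Continuous (dotR u) := by
  unfold dotR; fun_prop

/-- Every point of the Newton polyhedron dominates a point in the hull of few vertices. -/
lemma few_vertices {K : Type*} [Field K] {n : ℕ} (I : Ideal (MvPolynomial (Fin n) K))
    (hI : IsMonomialIdeal I) (hn : 0 < n) {q : Fin n → ℝ} (hq : q ∈ newtonPolyhedron I) :
    ∃ t : Finset (Fin n → ℝ), (t : Set (Fin n → ℝ)) ⊆ (newtonPolyhedron I).extremePoints ℝ ∧
      t.card ≤ maxCompactFaceDim I + 1 ∧ ∃ p ∈ convexHull ℝ (t : Set (Fin n → ℝ)), p ≤ q := by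
  set P := newtonPolyhedron I with hP
  have hPc : IsClosed P := newton_closed I hI
  obtain ⟨G, hG⟩ := newton_gens I hI
  -- a Pareto-minimal point below `q`
  have hcomp : IsCompact (P ∩ Set.Iic q) := by
    refine (isCompact_Icc (a := (0 : Fin n → ℝ)) (b := q)).of_isClosed_subset
      (hPc.inter isClosed_Iic) ?_
    rintro x ⟨hx, hxq⟩
    exact ⟨newton_nonneg I hx, hxq⟩
  obtain ⟨p, ⟨hpP, hpq⟩, hpmin⟩ := hcomp.exists_isMinOn ⟨q, hq, Set.mem_Iic.2 le_rfl⟩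
    (f := fun x : Fin n → ℝ => ∑ i, x i) (by fun_prop)
  have hpar : ∀ p' ∈ P, p' ≤ p → p' = p := by
    intro p' hp' hle
    have h1 : ∑ i, p i ≤ ∑ i, p' i := hpmin ⟨hp', hle.trans hpq⟩
    have h2 : ∀ i ∈ Finset.univ, p' i ≤ p i := fun i _ => hle i
    have h3 := (Finset.sum_eq_sum_iff_of_le h2).1 (le_antisymm (Finset.sum_le_sum h2) h1)
    ext i
    exact h3 i (Finset.mem_univ i)
  obtain ⟨u, hu, hug⟩ := pareto G p (by
    intro p' d hp' hd hle
    refine hpar _ ?_ hle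
    rw [hP, hG]
    exact ⟨p', hp', d, hd, rfl⟩)
  have hu0 : 0 ≤ u := fun i => (hu i).le
  set c := dotR u p with hc
  have hsupp : ∀ v ∈ P, c ≤ dotR u v := by
    intro v hv
    rw [hP, hG] at hv
    obtain ⟨w, hw, d, hd, rfl⟩ := hv
    have h1 : c ≤ dotR u w := by
      have : convexHull ℝ (G : Set (Fin n → ℝ)) ⊆ {w | c ≤ dotR u w} := by
        refine convexHull_min (fun g hg => hug g hg) ?_
        intro x hx y hy a b ha hb hab
        simp only [Set.mem_ofPred_eq] at hx hy ⊢
        rw [dotR_add, dotR_smul, dotR_smul]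
        calc c = a * c + b * c := by rw [← add_mul, hab, one_mul]
          _ ≤ _ := by gcongr
      exact this hw
    have h2 := dotR_nonneg hu0 hd
    dsimp only
    rw [dotR_add]
    linarith
  set F := {v ∈ P | dotR u v = c} with hF
  have hFsub : F ⊆ Set.Icc 0 (fun i => c / u i) := by
    rintro x ⟨hx, hxc⟩
    have hx0 := newton_nonneg I hx
    refine ⟨hx0, fun i => ?_⟩
    rw [le_div_iff₀ (hu i), ← hxc, mul_comm]
    exact Finset.single_le_sum (f := fun i => u i * x i)
      (fun i _ => mul_nonneg (hu i).le (hx0 i)) (Finset.mem_univ i)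
  have hFc : IsCompact F := isCompact_Icc.of_isClosed_subset
      (hPc.inter (isClosed_singleton.preimage (dotR_continuous u))) hFsub
  have hface : IsCompactFace P F := by
    refine ⟨⟨u, c, ?_, ⟨hsupp, p, hpP, rfl⟩, rfl, ?_⟩, hFc⟩
    · intro h
      have := hu ⟨0, hn⟩
      rw [h] at this
      exact lt_irrefl _ this
    · intro h
      have h1 : p + u ∈ F := by
        rw [h]; exact newton_add I hpP hu0
      have h2 := h1.2
      rw [dotR_add, ← hc] at h2
      have h3 : 0 < dotR u u := Finset.sum_pos (fun i _ => mul_pos (hu i) (hu i))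
        ⟨⟨0, hn⟩, Finset.mem_univ _⟩
      linarith
  have hext : IsExtreme ℝ P F := by
    refine ⟨fun x hx => hx.1, ?_⟩
    rintro x hx y hy z hz ⟨a, b, ha, hb, hab, rfl⟩
    refine ⟨hx, ?_⟩
    have h1 := hsupp x hx
    have h2 := hsupp y hy
    have h3 := hz.2
    rw [dotR_add, dotR_smul, dotR_smul] at h3
    have h4 : a * (dotR u x - c) + b * (dotR u y - c) = 0 := by
      have : (a + b) * c = c := by rw [hab, one_mul]
      linarith
    have h5 := mul_nonneg hb.le (sub_nonneg.2 h2)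
    have h6 : a * (dotR u x - c) ≤ 0 := by linarith
    have h7 := nonpos_of_mul_nonpos_right h6 ha
    linarith
  have hFconv : Convex ℝ F := by
    intro x hx y hy a b ha hb hab
    refine ⟨newton_convex I hx.1 hy.1 ha hb hab, ?_⟩
    rw [dotR_add, dotR_smul, dotR_smul, hx.2, hy.2, ← add_mul, hab, one_mul]
  have hEP := hext.extremePoints_subset_extremePoints
  have hfin : (F.extremePoints ℝ).Finite := by
    -- extreme points are integral points in a bounded set
    obtain ⟨b, hb⟩ : BddAbove F := ⟨_, fun x hx => (hFsub hx).2⟩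
    obtain ⟨N, hN⟩ : ∃ N : Fin n → ℕ, ∀ i, b i ≤ N i :=
      ⟨fun i => ⌈b i⌉₊, fun i => Nat.le_ceil _⟩
    refine ((Set.finite_Iic (Finsupp.equivFunOnFinite.symm N)).image expVec).subset ?_
    intro v hv
    obtain ⟨a, _, rfl⟩ := extremePoints_convexHull_subset (hEP hv)
    refine ⟨a, fun i => ?_, rfl⟩
    have h1 : expVec a i ≤ b i := hb (extremePoints_subset hv) i
    have h2 := h1.trans (hN i)
    simp only [expVec] at h2
    exact_mod_cast h2
  have hKM : F = convexHull ℝ (F.extremePoints ℝ) := by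
    have h1 := closure_convexHull_extremePoints hFc hFconv
    rw [(hfin.isClosed_convexHull (𝕜 := ℝ)).closure_eq] at h1
    exact h1.symm
  have hpF : p ∈ convexHull ℝ (F.extremePoints ℝ) := by
    rw [← hKM]; exact ⟨hpP, rfl⟩
  rw [convexHull_eq_union] at hpF
  simp only [exists_prop, Set.mem_iUnion] at hpF
  obtain ⟨t, ht1, ht2, ht3⟩ := hpF
  refine ⟨t, ht1.trans hEP, ?_, p, ht3, hpq⟩
  have h1 := ht2.card_le_finrank_succ
  rw [Fintype.card_coe] at h1
  refine h1.trans (Nat.add_le_add_right ?_ 1)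
  have h2 : Module.finrank ℝ (vectorSpan ℝ (Set.range ((↑) : t → (Fin n → ℝ)))) ≤
      Module.finrank ℝ (affineSpan ℝ F).direction := by
    rw [direction_affineSpan]
    refine Submodule.finrank_mono (vectorSpan_mono ℝ ?_)
    rintro _ ⟨x, rfl⟩
    exact extremePoints_subset (ht1 x.2)
  refine h2.trans (le_csSup ?_ ⟨F, hface, rfl⟩)
  refine ⟨n, ?_⟩
  rintro d ⟨F', _, rfl⟩
  simpa using Submodule.finrank_le (affineSpan ℝ F').direction

lemma expVec_inj {n : ℕ} {a b : Fin n →₀ ℕ} (h : expVec a = expVec b) : a = b := by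
  ext i
  have := congrFun h i
  simp only [expVec] at this
  exact_mod_cast this

lemma pow_gens {K : Type*} [Field K] {n : ℕ} (I : Ideal (MvPolynomial (Fin n) K))
    (hI : IsMonomialIdeal I) (k : ℕ) : ∃ T : Set (Fin n →₀ ℕ),
      I ^ (k + 1) = Ideal.span ((fun a => (monomial a (1 : K))) '' T) ∧
      ∀ t ∈ T, ∃ q ∈ newtonPolyhedron I, expVec t = ((k : ℝ) + 1) • q := by
  obtain ⟨S, hS⟩ := hI
  have hSm : ∀ s ∈ S, expVec s ∈ newtonPolyhedron I := fun s hs => mem_newton (by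
    rw [hS]; exact Ideal.subset_span ⟨s, hs, rfl⟩)
  induction k with
  | zero =>
    refine ⟨S, by simpa using hS, fun t ht => ⟨_, hSm t ht, by simp⟩⟩
  | succ k ih =>
    obtain ⟨T, hT, hTq⟩ := ih
    refine ⟨T + S, ?_, ?_⟩
    · rw [pow_succ, hT]
      conv_lhs => rw [hS]
      rw [Ideal.span_mul_span']
      congr 1
      ext f
      constructor
      · rintro ⟨_, ⟨t, ht, rfl⟩, _, ⟨s, hs, rfl⟩, rfl⟩
        exact ⟨t + s, ⟨t, ht, s, hs, rfl⟩, by simp [monomial_mul]⟩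
      · rintro ⟨_, ⟨t, ht, s, hs, rfl⟩, rfl⟩
        exact ⟨_, ⟨t, ht, rfl⟩, _, ⟨s, hs, rfl⟩, by simp [monomial_mul]⟩
    · rintro _ ⟨t, ht, s, hs, rfl⟩
      obtain ⟨q, hq, htq⟩ := hTq t ht
      have hk : (0 : ℝ) < (k : ℝ) + 2 := by positivity
      refine ⟨(((k : ℝ) + 1) / (k + 2)) • q + (1 / ((k : ℝ) + 2)) • expVec s,
        newton_convex I hq (hSm s hs) (by positivity) (by positivity) (by field_simp; ring), ?_⟩
      dsimp only
      rw [expVec_add, htq, smul_add, smul_smul, smul_smul]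
      congr 1
      · congr 1; push_cast; field_simp; ring
      · have : ((↑(k + 1) : ℝ) + 1) * (1 / ((k : ℝ) + 2)) = 1 := by
          push_cast; field_simp; ring
        rw [this, one_smul]

lemma newton_pow {K : Type*} [Field K] {n : ℕ} (I : Ideal (MvPolynomial (Fin n) K))
    (hI : IsMonomialIdeal I) (k : ℕ) {v : Fin n → ℝ} (hv : v ∈ newtonPolyhedron (I ^ (k + 1))) :
    ∃ q ∈ newtonPolyhedron I, v = ((k : ℝ) + 1) • q := by
  obtain ⟨T, hT, hTq⟩ := pow_gens I hI k
  have hk : (0 : ℝ) < (k : ℝ) + 1 := by positivity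
  have : newtonPolyhedron (I ^ (k + 1)) ⊆ ((k : ℝ) + 1) • newtonPolyhedron I := by
    refine convexHull_min ?_ ((newton_convex I).smul _)
    rintro _ ⟨a, ha, rfl⟩
    rw [hT, mem_mon_span] at ha
    obtain ⟨t, ht, hta⟩ := ha
    obtain ⟨q, hq, htq⟩ := hTq t ht
    refine ⟨q + ((k : ℝ) + 1)⁻¹ • expVec (a - t), newton_add I hq
      (smul_nonneg (by positivity) (expVec_nonneg _)), ?_⟩
    dsimp only
    rw [smul_add, smul_smul, mul_inv_cancel₀ hk.ne', one_smul, ← htq, ← expVec_add,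
      add_tsub_cancel_of_le hta]
  obtain ⟨q, hq, rfl⟩ := this hv
  exact ⟨q, hq, rfl⟩

lemma newton_smul {K : Type*} [Field K] {n : ℕ} (I : Ideal (MvPolynomial (Fin n) K))
    (k : ℕ) {q : Fin n → ℝ} (hq : q ∈ newtonPolyhedron I) :
    (k : ℝ) • q ∈ newtonPolyhedron (I ^ k) := by
  have : newtonPolyhedron I ⊆ (fun v => (k : ℝ) • v) ⁻¹' (newtonPolyhedron (I ^ k)) := by
    refine convexHull_min ?_ ((newton_convex (I ^ k)).smul_preimage _)
    rintro _ ⟨a, ha, rfl⟩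
    have h1 : (k : ℝ) • expVec a = expVec (k • a) := by ext i; simp [expVec]
    rw [Set.mem_preimage, h1]
    refine mem_newton ?_
    have := Ideal.pow_mem_pow ha k
    rwa [monomial_pow, one_pow] at this
  exact this hq

lemma ext_mem {K : Type*} [Field K] {n : ℕ} {I : Ideal (MvPolynomial (Fin n) K)}
    {v : Fin n → ℝ} (hv : v ∈ (newtonPolyhedron I).extremePoints ℝ) :
    ∃ a : Fin n →₀ ℕ, monomial a (1 : K) ∈ I ∧ v = expVec a := by
  have h : v ∈ {v | ∃ a : Fin n →₀ ℕ, monomial a (1 : K) ∈ I ∧ v = expVec a} :=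
    extremePoints_convexHull_subset hv
  exact h

lemma key_split {K : Type*} [Field K] {n : ℕ} (I : Ideal (MvPolynomial (Fin n) K))
    (hI : IsMonomialIdeal I) (hn : 0 < n) (k : ℕ) (hk : maxCompactFaceDim I ≤ k)
    (b : Fin n →₀ ℕ) (hb : expVec b ∈ newtonPolyhedron (I ^ (k + 1))) :
    ∃ a b' : Fin n →₀ ℕ, expVec a ∈ (newtonPolyhedron I).extremePoints ℝ ∧
      expVec b' ∈ newtonPolyhedron (I ^ k) ∧ a + b' = b := by
  obtain ⟨q, hq, hbq⟩ := newton_pow I hI k hb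
  obtain ⟨t, htE, htc, p, hp, hpq⟩ := few_vertices I hI hn hq
  rw [Finset.mem_convexHull'] at hp
  obtain ⟨w, hw0, hw1, hwp⟩ := hp
  have hk1 : (0 : ℝ) < (k : ℝ) + 1 := by positivity
  obtain ⟨v, hv, hwv⟩ : ∃ v ∈ t, 1 ≤ ((k : ℝ) + 1) * w v := by
    by_contra hcon
    push Not at hcon
    have hne : t.Nonempty := by
      rw [Finset.nonempty_iff_ne_empty]
      rintro rfl
      simp at hw1
    have h1 := Finset.sum_lt_sum_of_nonempty hne hcon
    rw [← Finset.mul_sum, hw1] at h1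
    simp only [Finset.sum_const, nsmul_eq_mul, mul_one] at h1
    have h2 : (t.card : ℝ) ≤ (k : ℝ) + 1 := by
      exact_mod_cast htc.trans (Nat.add_le_add_right hk 1)
    linarith
  obtain ⟨a, ha, hva⟩ := ext_mem (htE hv)
  have htP : ∀ x ∈ t, x ∈ newtonPolyhedron I := fun x hx => extremePoints_subset (htE hx)
  set c : (Fin n → ℝ) → ℝ := fun x => ((k : ℝ) + 1) * w x - (if x = v then 1 else 0) with hc
  have hc0 : ∀ x ∈ t, 0 ≤ c x := by
    intro x hx
    simp only [hc]
    split_ifs with h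
    · subst h; linarith
    · have := mul_nonneg hk1.le (hw0 x hx)
      linarith
  have hcs : ∑ x ∈ t, c x = k := by
    simp only [hc]
    rw [Finset.sum_sub_distrib, ← Finset.mul_sum, hw1, Finset.sum_ite_eq' t v, if_pos hv]
    ring
  set z := ∑ x ∈ t, c x • x with hz
  have hzp : z = ((k : ℝ) + 1) • p - v := by
    simp only [hz, hc, sub_smul, mul_smul]
    rw [Finset.sum_sub_distrib, ← Finset.smul_sum, hwp]
    congr 1
    simp [ite_smul, hv]
  have hz0 : 0 ≤ z := Finset.sum_nonneg fun x hx =>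
    smul_nonneg (hc0 x hx) (newton_nonneg I (htP x hx))
  have hd0 : 0 ≤ q - p := sub_nonneg.2 hpq
  have hbz : expVec b = expVec a + (z + ((k : ℝ) + 1) • (q - p)) := by
    rw [hbq, hzp, ← hva, smul_sub]; abel
  have hab : a ≤ b := by
    intro i
    have h1 := congrFun hbz i
    have h2 : 0 ≤ (z + ((k : ℝ) + 1) • (q - p)) i :=
      (add_nonneg hz0 (smul_nonneg hk1.le hd0)) i
    rw [Pi.add_apply] at h1
    have h3 : expVec a i ≤ expVec b i := by linarith
    simp only [expVec] at h3
    exact_mod_cast h3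
  refine ⟨a, b - a, hva ▸ htE hv, ?_, add_tsub_cancel_of_le hab⟩
  rcases Nat.eq_zero_or_pos k with rfl | hkp
  · exact mem_newton (by simp)
  · have hkr : (0 : ℝ) < k := by exact_mod_cast hkp
    have hb' : expVec (b - a) = z + ((k : ℝ) + 1) • (q - p) := by
      have h1 : expVec b = expVec a + expVec (b - a) := by
        rw [← expVec_add, add_tsub_cancel_of_le hab]
      rw [h1] at hbz
      exact add_left_cancel hbz
    have hzP : (k : ℝ)⁻¹ • z ∈ newtonPolyhedron I := by
      rw [hz, Finset.smul_sum]
      simp only [smul_smul]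
      refine (newton_convex I).sum_mem (fun x hx => mul_nonneg (by positivity) (hc0 x hx)) ?_ htP
      rw [← Finset.mul_sum, hcs, inv_mul_cancel₀ hkr.ne']
    have := newton_smul I k (newton_add I hzP
      (d := ((k : ℝ)⁻¹ * ((k : ℝ) + 1)) • (q - p)) (smul_nonneg (by positivity) hd0))
    rw [smul_add, smul_smul, smul_smul, ← mul_assoc, mul_inv_cancel₀ hkr.ne', one_smul,
      one_mul] at this
    rw [hb']
    exact this

theorem stmt19 {K : Type*} [Field K] {n : ℕ} (I J : Ideal (MvPolynomial (Fin n) K))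
    (hI : IsMonomialIdeal I) (hne : I ≠ ⊥) (hproper : I ≠ ⊤)
    (hJ : J = Ideal.span {f | ∃ a : Fin n →₀ ℕ,
        expVec a ∈ Set.extremePoints ℝ (newtonPolyhedron I) ∧ f = monomial a (1 : K)})
    (ℓ : ℕ) (hℓ : ℓ = maxCompactFaceDim I + 1)
    (hcl : ∀ a : ℕ, 1 ≤ a → a ≤ ℓ - 1 → I ^ a = intCl (I ^ a)) :
    I ^ ℓ = J * I ^ (ℓ - 1) ∧ ∀ a : ℕ, 1 ≤ a → I ^ a = intCl (I ^ a) := by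
  have hn : 0 < n := by
    rcases Nat.eq_zero_or_pos n with rfl | h
    · exfalso
      obtain ⟨S, hS⟩ := hI
      rcases S.eq_empty_or_nonempty with rfl | ⟨s, hs⟩
      · exact hne (by simpa using hS)
      · refine hproper ((Ideal.eq_top_iff_one I).2 ?_)
        rw [hS]
        refine Ideal.subset_span ⟨s, hs, ?_⟩
        have : s = 0 := Subsingleton.elim _ _
        rw [this]
        rfl
    · exact h
  set c := maxCompactFaceDim I with hc
  subst hℓ
  rw [Nat.add_sub_cancel] at hcl ⊢
  have hJI : J ≤ I := by
    rw [hJ, Ideal.span_le]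
    rintro _ ⟨a, ha, rfl⟩
    obtain ⟨a', ha', h⟩ := ext_mem ha
    rw [expVec_inj h]
    exact ha'
  have hle : ∀ k : ℕ, I ^ (k + 1) ≤ intCl (I ^ (k + 1)) := by
    intro k
    obtain ⟨T, hT, _⟩ := pow_gens I hI k
    have h1 : ∀ t ∈ T, monomial t (1 : K) ∈ I ^ (k + 1) := fun t ht => by
      rw [hT]; exact Ideal.subset_span ⟨t, ht, rfl⟩
    conv_lhs => rw [hT]
    rw [Ideal.span_le]
    rintro _ ⟨t, ht, rfl⟩
    exact Ideal.subset_span ⟨t, mem_newton (h1 t ht), rfl⟩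
  have hstep : ∀ k : ℕ, c ≤ k → intCl (I ^ (k + 1)) ≤ J * intCl (I ^ k) := by
    intro k hk
    unfold intCl
    rw [Ideal.span_le]
    rintro _ ⟨b, hb, rfl⟩
    obtain ⟨a, b', ha, hb', rfl⟩ := key_split I hI hn k hk b hb
    have : monomial (a + b') (1 : K) = monomial a 1 * monomial b' 1 := by
      rw [monomial_mul, one_mul]
    rw [this]
    refine Ideal.mul_mem_mul ?_ (Ideal.subset_span ⟨b', hb', rfl⟩)
    rw [hJ]
    exact Ideal.subset_span ⟨a, ha, rfl⟩
  have hcl' : ∀ k : ℕ, c ≤ k → intCl (I ^ k) ≤ I ^ k := by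
    intro k hk
    induction k, hk using Nat.le_induction with
    | base =>
      rcases Nat.eq_zero_or_pos c with h | h
      · rw [h, pow_zero, Ideal.one_eq_top]; exact le_top
      · exact (hcl c h le_rfl).ge
    | succ k hk ih =>
      refine (hstep k hk).trans ?_
      rw [pow_succ']
      exact Ideal.mul_mono hJI ih
  refine ⟨le_antisymm ?_ ?_, ?_⟩
  · exact (hle c).trans ((hstep c le_rfl).trans (Ideal.mul_mono le_rfl (hcl' c le_rfl)))
  · rw [pow_succ']
    exact Ideal.mul_mono hJI le_rfl
  · intro a ha
    rcases le_or_gt a c with h | h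
    · exact hcl a ha h
    · refine le_antisymm ?_ (hcl' a h.le)
      obtain ⟨k, rfl⟩ := Nat.exists_eq_add_of_le' ha
      exact hle k
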